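/- arXiv:1102.4674 — 3 statements merged into one kernel-verified Lean document; each statement's English description precedes it below -/
import Mathlib

section
/- Lemma 3.1: Let t ≥ 4. Suppose x^1,…,x^k are circuits of A_{t,t+1} admitting a primitive relation h with x^k the cycle (v_1,u_2,v_2,u_3,…,v_t,u_{t+1}) and h_k = 1. Then there exist circuits x̄^1,…,x̄^{k+t} of A_{t+1,t+1} admitting a primitive relation h̄ with x̄^{k+t} the cycle (v_1,u_1,v_2,u_2,…,v_{t+1},u_{t+1}), h̄_{k+t} = 1, and ‖h̄‖₁ = ‖h‖₁ + t. -/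
/-- A `t × r` integer matrix lies in `ker_ℤ(A_{t,r})` iff all row sums and column sums vanish. -/
def tableKer {t r : ℕ} (x : Matrix (Fin t) (Fin r) ℤ) : Prop :=
  (∀ i, ∑ j, x i j = 0) ∧ (∀ j, ∑ i, x i j = 0)

/-- A circuit of `A_{t,r}`: a nonzero element of the kernel with inclusion-minimal support
whose nonzero entries are relatively prime. -/
def isCircuit {t r : ℕ} (x : Matrix (Fin t) (Fin r) ℤ) : Prop :=
  tableKer x ∧ x ≠ 0 ∧
  (∀ y : Matrix (Fin t) (Fin r) ℤ, tableKer y → y ≠ 0 →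
    (∀ i j, y i j ≠ 0 → x i j ≠ 0) → (∀ i j, x i j ≠ 0 → y i j ≠ 0)) ∧
  Finset.univ.gcd (fun p : Fin t × Fin r => x p.1 p.2) = 1

/-- `h` is a primitive relation on `x^1,…,x^k`: the `h i` are relatively prime positive
integers, `∑ h i • x i = 0`, and no `k−1` of the `x i` satisfy any nontrivial relation. -/
def isPrimitiveRelation {t r k : ℕ} (h : Fin k → ℤ)
    (x : Fin k → Matrix (Fin t) (Fin r) ℤ) : Prop :=
  (∀ i, 0 < h i) ∧ Finset.univ.gcd h = 1 ∧ (∑ i, h i • x i = 0) ∧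
  (∀ (c : Fin k → ℤ) (i₀ : Fin k), c i₀ = 0 → ∑ i, c i • x i = 0 → c = 0)

/-- The matrix of the alternating cycle `(v_1,u_{c+1},v_2,u_{c+2},…,v_t,u_{c+t})`
(zero-indexed: `+1` at `(i, c+i)`, `−1` at `(i+1 mod t, c+i)`). -/
def cycleMat (t r : ℕ) (c : ℕ) : Matrix (Fin t) (Fin r) ℤ :=
  fun i j => (if (j : ℕ) = c + (i : ℕ) then 1 else 0) -
    (if (j : ℕ) = c + (((i : ℕ) + (t - 1)) % t) then 1 else 0)

lemma isCircuit_of_unique {t r : ℕ} (x : Matrix (Fin t) (Fin r) ℤ) (hx : tableKer x)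
    (a : Fin t) (p : Fin r) (hap : x a p = 1)
    (hu : ∀ y : Matrix (Fin t) (Fin r) ℤ, tableKer y → (∀ i j, x i j = 0 → y i j = 0) →
      ∀ i j, y i j = y a p * x i j) : isCircuit x := by
  refine ⟨hx, ?_, ?_, ?_⟩
  · rintro rfl
    simp at hap
  · intro y hy hy0 hs i j hij hyij
    have h1 := hu y hy (fun i j h0 => by
      by_contra h
      exact hs i j h h0)
    have h2 := h1 i j
    rw [hyij] at h2
    have h3 : y a p = 0 := by
      rcases mul_eq_zero.mp h2.symm with h | h
      · exact h
      · exact absurd h hij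
    apply hy0
    ext i j
    rw [h1 i j, h3]
    simp
  · have h1 : Finset.univ.gcd (fun p : Fin t × Fin r => x p.1 p.2) ∣ 1 := by
      have := Finset.gcd_dvd (f := fun p : Fin t × Fin r => x p.1 p.2)
        (Finset.mem_univ (a, p))
      simpa [hap] using this
    have h2 := Finset.normalize_gcd (s := Finset.univ)
      (f := fun p : Fin t × Fin r => x p.1 p.2)
    rw [← h2]
    exact normalize_eq_one.mpr (isUnit_of_dvd_one h1)

/-- a general Hamiltonian cycle -/
def hamMat (n : ℕ) (σ : Equiv.Perm (Fin (n+1))) : Matrix (Fin (n+1)) (Fin (n+1)) ℤ :=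
  fun i j => (if j = σ i then 1 else 0) - (if j = σ (i - 1) then 1 else 0)

lemma val_one_fin {n : ℕ} (hn : 1 ≤ n) : ((1 : Fin (n+1)) : ℕ) = 1 := by
  obtain ⟨m, rfl⟩ : ∃ m, n = m + 1 := ⟨n - 1, by omega⟩
  rfl

lemma hamMat_one (n : ℕ) (i j : Fin (n+1)) : hamMat n 1 i j =
    (if j = i then 1 else 0) - (if j = i - 1 then 1 else 0) := rfl

lemma hamMat_add (n : ℕ) (i j : Fin (n+1)) : hamMat n (Equiv.addRight 1) i j =
    (if j = i + 1 then 1 else 0) - (if j = i then 1 else 0) := by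
  have : i - 1 + 1 = i := sub_add_cancel i 1
  unfold hamMat
  rw [Equiv.coe_addRight]
  beta_reduce
  rw [this]

lemma fin_sub_one_ne {n : ℕ} (hn : 1 ≤ n) (i : Fin (n+1)) : i - 1 ≠ i := by
  intro h
  have h1 : (1 : Fin (n+1)) = 0 := by simpa using h
  have := congrArg Fin.val h1
  rw [val_one_fin hn, Fin.val_zero] at this
  omega

lemma sum_two {α : Type*} [Fintype α] [DecidableEq α] (f : α → ℤ) (a b : α) (hab : a ≠ b)
    (h : ∀ c, c ≠ a → c ≠ b → f c = 0) : ∑ c, f c = f a + f b := by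
  rw [← Finset.sum_pair hab]
  symm
  apply Finset.sum_subset (Finset.subset_univ _)
  intro c _ hc
  simp at hc
  exact h c hc.1 hc.2

lemma hamMat_circuit (n : ℕ) (hn : 1 ≤ n) (σ : Equiv.Perm (Fin (n+1))) :
    isCircuit (hamMat n σ) := by
  have hz : ∀ i j, j ≠ σ i → j ≠ σ (i-1) → hamMat n σ i j = 0 := by
    intro i j h1 h2
    simp [hamMat, h1, h2]
  have hd : ∀ i, hamMat n σ i (σ i) = 1 := by
    intro i
    simp [hamMat, (fin_sub_one_ne hn i).symm]
  have ho : ∀ i, hamMat n σ i (σ (i-1)) = -1 := by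
    intro i
    simp [hamMat, (fin_sub_one_ne hn i)]
  have row : ∀ y : Matrix (Fin (n+1)) (Fin (n+1)) ℤ, (∀ i j, hamMat n σ i j = 0 → y i j = 0) →
      ∀ i, ∑ j, y i j = y i (σ i) + y i (σ (i-1)) := by
    intro y hy i
    apply sum_two
    · intro h
      exact fin_sub_one_ne hn i (σ.injective h).symm
    · intro c h1 h2
      exact hy _ _ (hz _ _ h1 h2)
  have col : ∀ y : Matrix (Fin (n+1)) (Fin (n+1)) ℤ, (∀ i j, hamMat n σ i j = 0 → y i j = 0) →
      ∀ j, ∑ i, y i (σ j) = y j (σ j) + y (j+1) (σ j) := by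
    intro y hy j
    apply sum_two (fun i => y i (σ j))
    · intro h
      apply fin_sub_one_ne hn (j+1)
      simpa using h
    · intro c h1 h2
      apply hy _ _ (hz _ _ _ _)
      · intro h
        exact h1 (σ.injective h).symm
      · intro h
        apply h2
        rw [σ.injective h]
        simp
  refine isCircuit_of_unique _ ⟨?_, ?_⟩ 0 (σ 0) (hd 0) ?_
  · intro i
    rw [row _ (fun _ _ h => h), hd, ho]
    simp
  · intro j
    obtain ⟨j, rfl⟩ := σ.surjective j
    rw [col _ (fun _ _ h => h), hd]
    have := ho (j+1)
    rw [add_sub_cancel_right] at this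
    rw [this]
    simp
  · intro y hy hs
    have h1 : ∀ i : Fin (n+1), y i (σ i) = y 0 (σ 0) := by
      intro i
      induction i using Fin.induction with
      | zero => rfl
      | succ i ih =>
        have e1 := hy.2 (σ i.castSucc)
        rw [col y hs] at e1
        have e2 := hy.1 (i.castSucc + 1)
        rw [row y hs, add_sub_cancel_right] at e2
        rw [Fin.coeSucc_eq_succ] at e1 e2
        linarith
    intro i j
    by_cases ha : j = σ i
    · rw [ha, hd, h1]; ring
    by_cases hb : j = σ (i-1)
    · have e2 := hy.1 i
      rw [row y hs, h1] at e2
      rw [hb, ho]; linarith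
    · rw [hz _ _ ha hb, hs _ _ (hz _ _ ha hb)]; ring

/-- four-cycle -/
def rectMat (n : ℕ) (a b p q : Fin n) : Matrix (Fin n) (Fin n) ℤ :=
  fun i j => ((if i = a then 1 else 0) - (if i = b then 1 else 0)) *
    ((if j = p then 1 else 0) - (if j = q then 1 else 0))

lemma rectMat_circuit (n : ℕ) (a b p q : Fin n) (hab : a ≠ b) (hpq : p ≠ q) :
    isCircuit (rectMat n a b p q) := by
  have hr : ∀ i j, i ≠ a → i ≠ b → rectMat n a b p q i j = 0 := by
    intro i j h1 h2
    simp [rectMat, h1, h2]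
  have hc : ∀ i j, j ≠ p → j ≠ q → rectMat n a b p q i j = 0 := by
    intro i j h1 h2
    simp [rectMat, h1, h2]
  refine isCircuit_of_unique _ ⟨?_, ?_⟩ a p ?_ ?_
  · intro i
    simp [rectMat, ← Finset.mul_sum]
  · intro i
    simp [rectMat, ← Finset.sum_mul]
  · simp [rectMat, hab, hpq]
  · intro y hy hs
    have row : ∀ i, y i p + y i q = 0 := by
      intro i
      rw [← hy.1 i, sum_two _ p q hpq]
      intro c h1 h2
      exact hs _ _ (hc _ _ h1 h2)
    have col : ∀ j, y a j + y b j = 0 := by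
      intro j
      rw [← hy.2 j, sum_two (fun i => y i j) a b hab]
      intro c h1 h2
      exact hs _ _ (hr _ _ h1 h2)
    have e1 := row a
    have e2 := row b
    have e3 := col p
    intro i j
    by_cases h1 : i ≠ a ∧ i ≠ b
    · rw [hr _ _ h1.1 h1.2, hs _ _ (hr _ _ h1.1 h1.2)]; ring
    by_cases h2 : j ≠ p ∧ j ≠ q
    · rw [hc _ _ h2.1 h2.2, hs _ _ (hc _ _ h2.1 h2.2)]; ring
    have h1' : i = a ∨ i = b := by tauto
    have h2' : j = p ∨ j = q := by tauto
    rcases h1' with rfl | rfl <;> rcases h2' with rfl | rfl <;>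
      simp [rectMat, hab, hpq, hab.symm, hpq.symm] <;> linarith

/-- append a zero row -/
def embMat {t r : ℕ} (x : Matrix (Fin t) (Fin r) ℤ) : Matrix (Fin (t+1)) (Fin r) ℤ :=
  fun i j => Fin.lastCases (motive := fun _ => ℤ) 0 (fun i => x i j) i

@[simp] lemma embMat_castSucc {t r : ℕ} (x : Matrix (Fin t) (Fin r) ℤ) (i : Fin t) (j : Fin r) :
    embMat x i.castSucc j = x i j := by simp [embMat]

@[simp] lemma embMat_last {t r : ℕ} (x : Matrix (Fin t) (Fin r) ℤ) (j : Fin r) :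
    embMat x (Fin.last t) j = 0 := by simp [embMat]

lemma embMat_circuit {t r : ℕ} (x : Matrix (Fin t) (Fin r) ℤ) (hx : isCircuit x) :
    isCircuit (embMat x) := by
  obtain ⟨⟨h1, h2⟩, h3, h4, h5⟩ := hx
  refine ⟨⟨?_, ?_⟩, ?_, ?_, ?_⟩
  · intro i
    induction i using Fin.lastCases with
    | last => simp
    | cast i => simpa using h1 i
  · intro j
    rw [Fin.sum_univ_castSucc]
    simpa using h2 j
  · intro h
    apply h3
    ext i j
    have := congrFun (congrFun h i.castSucc) j
    simpa using this
  · intro y hy hy0 hs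
    have hl : ∀ j, y (Fin.last t) j = 0 := by
      intro j
      by_contra h
      exact hs _ _ h (by simp)
    have key := h4 (fun i j => y i.castSucc j) ⟨fun i => hy.1 i.castSucc, fun j => by
      have := hy.2 j
      rw [Fin.sum_univ_castSucc, hl] at this
      simpa using this⟩ (by
        intro h
        apply hy0
        ext i j
        induction i using Fin.lastCases with
        | last => simpa using hl j
        | cast i => exact congrFun (congrFun h i) j) (fun i j h => by
          simpa using hs i.castSucc j h)
    intro i j hij
    induction i using Fin.lastCases with
    | last => simp at hij
    | cast i => exact key i j (by simpa using hij)
  · rw [← Finset.normalize_gcd]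
    apply normalize_eq_one.mpr
    apply isUnit_of_dvd_one
    rw [← h5]
    apply Finset.dvd_gcd
    intro p _
    have := Finset.gcd_dvd (f := fun p : Fin (t+1) × Fin r => embMat x p.1 p.2)
        (Finset.mem_univ (p.1.castSucc, p.2))
    simpa using this

/-- the new circuits -/
def newMat (t : ℕ) (j : Fin (t+1)) : Matrix (Fin (t+1)) (Fin (t+1)) ℤ :=
  if j = 0 then hamMat t (Equiv.addRight 1) else
  if j = Fin.last t then hamMat t 1 else rectMat (t+1) j (Fin.last t) (j-1) j

lemma last_add_one (t : ℕ) : Fin.last t + 1 = 0 := by simp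

lemma zero_sub_one (t : ℕ) : (0 : Fin (t+1)) - 1 = Fin.last t := by
  rw [sub_eq_iff_eq_add]; simp

lemma newMat_circuit (t : ℕ) (ht : 1 ≤ t) (j : Fin (t+1)) : isCircuit (newMat t j) := by
  unfold newMat
  split_ifs with h1 h2
  · exact hamMat_circuit t ht _
  · exact hamMat_circuit t ht _
  · exact rectMat_circuit _ _ _ _ _ h2 (fin_sub_one_ne ht j)

lemma newMat_last (t : ℕ) (ht : 1 ≤ t) (j c : Fin (t+1)) :
    newMat t j (Fin.last t) c = (if c = j then 1 else 0) - (if c = j - 1 then 1 else 0) := by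
  unfold newMat
  by_cases h1 : j = 0
  · subst h1
    rw [if_pos rfl, zero_sub_one]
    simp only [hamMat, Equiv.coe_addRight, last_add_one, sub_add_cancel]
  · rw [if_neg h1]
    by_cases h2 : j = Fin.last t
    · subst h2
      rw [if_pos rfl, hamMat_one]
    · rw [if_neg h2]
      simp [rectMat, Ne.symm h2]

lemma newMat_sum (t : ℕ) (ht : 1 ≤ t) :
    ∑ j, newMat t j = embMat (cycleMat t (t+1) 1) := by
  have hl0 : Fin.last t ≠ 0 := by
    intro h
    have := congrArg Fin.val h
    simp at this
    omega
  have h1 : ∀ j, newMat t j = rectMat (t+1) j (Fin.last t) (j-1) j +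
      ((if j = 0 then hamMat t (Equiv.addRight 1) - rectMat (t+1) 0 (Fin.last t) (0-1) 0 else 0) +
      (if j = Fin.last t then hamMat t 1 else 0)) := by
    intro j
    unfold newMat
    split_ifs with h1 h2 h2
    · exact absurd (h2.symm.trans h1) hl0
    · rw [h1]; simp
    · rw [h2]; ext a b; simp [rectMat]
    · simp
  simp_rw [h1]
  rw [Finset.sum_add_distrib, Finset.sum_add_distrib]
  simp only [Finset.sum_ite_eq', Finset.mem_univ, if_true]
  ext i c
  have h2 : (∑ j, rectMat (t+1) j (Fin.last t) (j-1) j) i c =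
      (if c = i - 1 then 1 else 0) - (if c = i then 1 else 0) := by
    rw [Matrix.sum_apply]
    have : ∀ j, rectMat (t+1) j (Fin.last t) (j-1) j i c =
        (if i = j then ((if c = j - 1 then 1 else 0) - (if c = j then 1 else 0)) else 0) -
        (if i = Fin.last t then 1 else 0) *
          ((if c + 1 = j then 1 else 0) - (if c = j then 1 else 0)) := by
      intro j
      have e : (c = j - 1) ↔ (c + 1 = j) := eq_sub_iff_add_eq
      simp only [rectMat, e]
      split_ifs <;> simp
    simp_rw [this]
    rw [Finset.sum_sub_distrib, ← Finset.mul_sum, Finset.sum_sub_distrib]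
    simp
  rw [Matrix.add_apply, h2]
  simp only [Matrix.add_apply, Matrix.sub_apply, hamMat_one, hamMat_add, rectMat, zero_sub_one]
  induction i using Fin.lastCases with
  | last =>
    simp only [hl0, last_add_one, embMat_last, if_true, if_false]
    ring
  | cast i =>
    rw [embMat_castSucc]
    have e0 : i.castSucc ≠ Fin.last t := i.castSucc_lt_last.ne
    have e1 : (c = i.castSucc + 1) ↔ (c : ℕ) = 1 + i := by
      rw [Fin.coeSucc_eq_succ, Fin.ext_iff, Fin.val_succ, add_comm (i : ℕ) 1]
    have hi := i.isLt
    simp only [cycleMat, e0, e1, if_false]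
    by_cases h0 : (i : ℕ) = 0
    · have e2 : i.castSucc = 0 := Fin.ext (by simpa using h0)
      have e3 : 1 + ((i:ℕ) + (t-1)) % t = t := by
        rw [h0, Nat.mod_eq_of_lt (by omega)]; omega
      have e4 : (c = Fin.last t) ↔ (c:ℕ) = t := by rw [Fin.ext_iff, Fin.val_last]
      rw [e3, e2, zero_sub_one]
      simp only [e4, if_true]
      ring
    · have e2 : i.castSucc ≠ 0 := fun h => h0 (by simpa using congrArg Fin.val h)
      have e3 : 1 + ((i:ℕ) + (t-1)) % t = i := by
        have : (i:ℕ) + (t-1) = (i - 1) + t := by omega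
        rw [this, Nat.add_mod_right, Nat.mod_eq_of_lt (by omega)]; omega
      have e4 : (c = i.castSucc) ↔ (c:ℕ) = i := by rw [Fin.ext_iff, Fin.val_castSucc]
      rw [e3]
      simp only [e4, e2, if_false]
      ring

lemma newMat_indep (t : ℕ) (ht : 1 ≤ t) (d : Fin (t+1) → ℤ)
    (hd : ∀ c, ∑ j, d j * newMat t j (Fin.last t) c = 0) : ∀ j, d j = d 0 := by
  have h1 : ∀ c, d c = d (c+1) := by
    intro c
    have := hd c
    have e : ∀ j, (c = j - 1) ↔ (c + 1 = j) := fun j => eq_sub_iff_add_eq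
    simp only [newMat_last t ht, e, mul_sub, Finset.sum_sub_distrib] at this
    simp at this
    linarith
  intro j
  induction j using Fin.induction with
  | zero => rfl
  | succ i ih => rw [← ih, h1 i.castSucc, Fin.coeSucc_eq_succ]

lemma newMat_end (t : ℕ) (ht : 1 ≤ t) : newMat t (Fin.last t) = cycleMat (t+1) (t+1) 0 := by
  have hl0 : Fin.last t ≠ 0 := by
    intro h
    have := congrArg Fin.val h
    simp at this
    omega
  ext i c
  simp only [newMat, hl0, if_false, if_true, hamMat_one, cycleMat, zero_add]
  have e1 : (c = i) ↔ (c:ℕ) = i := Fin.ext_iff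
  have e2 : (c = i - 1) ↔ (c:ℕ) = ((i:ℕ) + (t + 1 - 1)) % (t+1) := by
    rw [Fin.ext_iff, Fin.val_sub, val_one_fin ht]
    rw [add_comm (i : ℕ)]
  simp only [e1, e2]

theorem lemma_3_1 (t k : ℕ) (ht : 4 ≤ t) (hk : 0 < k)
    (x : Fin k → Matrix (Fin t) (Fin (t+1)) ℤ) (h : Fin k → ℤ)
    (hcirc : ∀ i, isCircuit (x i)) (hprim : isPrimitiveRelation h x)
    (hxk : x ⟨k - 1, by omega⟩ = cycleMat t (t+1) 1)
    (hhk : h ⟨k - 1, by omega⟩ = 1) :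
    ∃ (x' : Fin (k + t) → Matrix (Fin (t+1)) (Fin (t+1)) ℤ) (h' : Fin (k + t) → ℤ),
      (∀ i, isCircuit (x' i)) ∧ isPrimitiveRelation h' x' ∧
      x' ⟨k + t - 1, by omega⟩ = cycleMat (t+1) (t+1) 0 ∧
      h' ⟨k + t - 1, by omega⟩ = 1 ∧
      (∑ i, |h' i|) = (∑ i, |h i|) + t := by
  obtain ⟨m, rfl⟩ : ∃ m, k = m + 1 := ⟨k - 1, by omega⟩
  have ht1 : 1 ≤ t := by omega
  replace hxk : x (Fin.last m) = cycleMat t (t+1) 1 := hxk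
  replace hhk : h (Fin.last m) = 1 := hhk
  obtain ⟨hpos, hgcd, hsum, hind⟩ := hprim
  suffices key : ∀ N (hN : N = m + (t+1)),
      ∃ (x' : Fin N → Matrix (Fin (t+1)) (Fin (t+1)) ℤ) (h' : Fin N → ℤ),
      (∀ i, isCircuit (x' i)) ∧ isPrimitiveRelation h' x' ∧
      x' ⟨N - 1, by omega⟩ = cycleMat (t+1) (t+1) 0 ∧
      h' ⟨N - 1, by omega⟩ = 1 ∧
      (∑ i, |h' i|) = (∑ i, |h i|) + t from key (m + 1 + t) (by omega)
  intro N hN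
  subst hN
  have hlast : (⟨m + (t+1) - 1, by omega⟩ : Fin (m + (t+1))) = Fin.natAdd m (Fin.last t) := by
    apply Fin.ext
    simp
  refine ⟨Fin.append (fun i : Fin m => embMat (x i.castSucc)) (newMat t),
    Fin.append (fun i : Fin m => h i.castSucc) (fun _ => 1), ?_, ⟨?_, ?_, ?_, ?_⟩, ?_, ?_, ?_⟩
  · intro i
    induction i using Fin.addCases with
    | left i => rw [Fin.append_left]; exact embMat_circuit _ (hcirc _)
    | right i => rw [Fin.append_right]; exact newMat_circuit t ht1 i
  · intro i
    induction i using Fin.addCases with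
    | left i => rw [Fin.append_left]; exact hpos _
    | right i => rw [Fin.append_right]; exact one_pos
  · rw [← Finset.normalize_gcd]
    apply normalize_eq_one.mpr
    apply isUnit_of_dvd_one
    have := Finset.gcd_dvd (f := Fin.append (fun i : Fin m => h i.castSucc)
      (fun _ : Fin (t+1) => (1:ℤ))) (Finset.mem_univ (Fin.natAdd m 0))
    rwa [Fin.append_right] at this
  · rw [Fin.sum_univ_add]
    simp only [Fin.append_left, Fin.append_right, one_smul]
    rw [newMat_sum t ht1, ← hxk]
    rw [Fin.sum_univ_castSucc, hhk, one_smul] at hsum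
    ext i j
    induction i using Fin.lastCases with
    | last => simp [Matrix.sum_apply, Matrix.smul_apply, -zsmul_eq_mul]
    | cast i =>
      have := congrFun (congrFun hsum i) j
      simpa [Matrix.sum_apply, Matrix.smul_apply, -zsmul_eq_mul] using this
  · intro c i₀ hc0 hc
    rw [Fin.sum_univ_add] at hc
    simp only [Fin.append_left, Fin.append_right] at hc
    have hd : ∀ j, c (Fin.natAdd m j) = c (Fin.natAdd m 0) := by
      apply newMat_indep t ht1 (fun j => c (Fin.natAdd m j))
      intro q
      have := congrFun (congrFun hc (Fin.last t)) q
      simpa [Matrix.sum_apply, Matrix.smul_apply, -zsmul_eq_mul] using this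
    set d := c (Fin.natAdd m 0) with hdd
    simp only [hd] at hc
    rw [← Finset.smul_sum, newMat_sum t ht1, ← hxk] at hc
    have h0 : ∑ i : Fin m, c (Fin.castAdd (t+1) i) • x i.castSucc + d • x (Fin.last m) = 0 := by
      ext i j
      have := congrFun (congrFun hc i.castSucc) j
      simpa [Matrix.sum_apply, Matrix.smul_apply, -zsmul_eq_mul] using this
    have he := hind (fun i => Fin.snoc (α := fun _ => ℤ) (fun i : Fin m => c (Fin.castAdd (t+1) i)) d i
      - d * h i) (Fin.last m) (by simp [hhk]) (by
        simp only [sub_smul, Finset.sum_sub_distrib, mul_smul, ← Finset.smul_sum, hsum]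
        rw [Fin.sum_univ_castSucc]
        simpa using h0)
    have hci : ∀ i : Fin m, c (Fin.castAdd (t+1) i) = d * h i.castSucc := by
      intro i
      have := congrFun he i.castSucc
      simp at this
      linarith
    have hd0 : d = 0 := by
      induction i₀ using Fin.addCases with
      | left i =>
        rw [hci] at hc0
        exact (mul_eq_zero.mp hc0).resolve_right (hpos _).ne'
      | right i => rw [← hd i, hc0]
    funext i
    induction i using Fin.addCases with
    | left i => rw [hci, hd0]; simp
    | right i => rw [hd, hd0]; simp
  · rw [hlast, Fin.append_right]; exact newMat_end t ht1
  · rw [hlast, Fin.append_right]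
  · rw [Fin.sum_univ_add, Fin.sum_univ_castSucc (n := m)]
    simp [hhk]
    ring
end

section
/- Lemma 3.2: Let r ≥ t ≥ 4. Suppose x^1,…,x^k are circuits of A_{t,r} admitting a primitive relation h with x^k the cycle (v_1,u_{r−t+1},v_2,u_{r−t+2},…,v_t,u_r) and h_k = 1. Then there exist circuits x̄^1,…,x̄^{k+t−1} of A_{t,r+1} admitting a primitive relation h̄ with x̄^{k+t−1} the cycle (v_1,u_{r−t+2},v_2,u_{r−t+3},…,v_t,u_{r+1}), h̄_i = (t−1)h_i for i = 1,…,k−1, and h̄_k = ⋯ = h̄_{k+t−1} = 1; in particular ‖h̄‖₁ = (t−1)(‖h‖₁ − 1) + t. -/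
/-- Push a matrix forward along a map of column indices. -/
def pushM {t r n : ℕ} (f : Fin r → Fin n) (M : Matrix (Fin t) (Fin r) ℤ) :
    Matrix (Fin t) (Fin n) ℤ :=
  fun i j => ∑ l, if f l = j then M i l else 0

theorem pushM_apply {t r n : ℕ} {f : Fin r → Fin n} (hf : Function.Injective f)
    (M : Matrix (Fin t) (Fin r) ℤ) (i : Fin t) (l : Fin r) : pushM f M i (f l) = M i l := by
  unfold pushM
  rw [Finset.sum_eq_single l]
  · simp
  · intro b _ hb
    rw [if_neg]
    intro h
    exact hb (hf h)
  · simp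

theorem pushM_zero {t r n : ℕ} {f : Fin r → Fin n}
    (M : Matrix (Fin t) (Fin r) ℤ) (i : Fin t) (j : Fin n) (hj : ∀ l, f l ≠ j) :
    pushM f M i j = 0 := by
  unfold pushM
  exact Finset.sum_eq_zero fun l _ => if_neg (hj l)

theorem pushM_circuit {t r n : ℕ} {f : Fin r → Fin n} (hf : Function.Injective f)
    (M : Matrix (Fin t) (Fin r) ℤ) (hM : isCircuit M) : isCircuit (pushM f M) := by
  obtain ⟨⟨hr, hc⟩, h0, hmin, hg⟩ := hM
  refine ⟨⟨?_, ?_⟩, ?_, ?_, ?_⟩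
  · intro i
    unfold pushM
    rw [Finset.sum_comm]
    simpa using hr i
  · intro j
    by_cases hj : ∃ l, f l = j
    · obtain ⟨l, rfl⟩ := hj
      simp only [pushM_apply hf]
      exact hc l
    · push Not at hj
      exact Finset.sum_eq_zero fun i _ => pushM_zero M i j hj
  · intro h
    apply h0
    ext i l
    rw [← pushM_apply hf M i l, h]
    rfl
  · intro y hy hy0 hsub
    have hz : ∀ i j, (∀ l, f l ≠ j) → y i j = 0 := by
      intro i j hj
      by_contra hne
      exact hsub i j hne (pushM_zero M i j hj)
    have key := hmin (fun i l => y i (f l)) ⟨?_, ?_⟩ ?_ ?_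
    · intro i j hne
      by_cases hj : ∃ l, f l = j
      · obtain ⟨l, rfl⟩ := hj
        rw [pushM_apply hf] at hne
        exact key i l hne
      · push Not at hj
        exact absurd (pushM_zero M i j hj) hne
    · intro i
      rw [← hy.1 i]
      refine Finset.sum_of_injOn f hf.injOn (by simp) ?_ (fun _ _ => rfl)
      intro j _ hj
      apply hz i j
      intro l e
      exact hj ⟨l, by simp, e⟩
    · intro l
      exact hy.2 (f l)
    · intro h
      apply hy0
      ext i j
      by_cases hj : ∃ l, f l = j
      · obtain ⟨l, rfl⟩ := hj
        exact congrFun (congrFun h i) l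
      · push Not at hj
        exact hz i j hj
    · intro i l hne
      have := hsub i (f l) hne
      rwa [pushM_apply hf] at this
  · have h1 : (Finset.univ.gcd (fun p : Fin t × Fin n => pushM f M p.1 p.2)) ∣ 1 := by
      rw [← hg]
      apply Finset.dvd_gcd
      rintro ⟨i, l⟩ _
      have := Finset.gcd_dvd (f := fun p : Fin t × Fin n => pushM f M p.1 p.2)
        (Finset.mem_univ (i, f l))
      simpa only [pushM_apply hf] using this
    rw [← Finset.normalize_gcd]
    exact normalize_eq_one.2 (isUnit_of_dvd_one h1)

/-- The column embedding for the old circuits. -/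
def sig (t r : ℕ) (l : Fin r) : Fin (r + 1) :=
  if (l : ℕ) < r - t then ⟨l, by omega⟩ else
    if (l : ℕ) = r - 1 then ⟨r - t, by omega⟩ else ⟨l + 1, by omega⟩

/-- The column embedding for the new circuits. -/
def sigj (t r : ℕ) (j : ℕ) (l : Fin r) : Fin (r + 1) :=
  if (l : ℕ) = r - t + j then ⟨r, by omega⟩ else sig t r l

theorem sig_val (t r : ℕ) (l : Fin r) : (sig t r l : ℕ) =
    if (l : ℕ) < r - t then (l : ℕ) else if (l : ℕ) = r - 1 then r - t else l + 1 := by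
  unfold sig
  split_ifs <;> rfl

theorem sigj_val (t r j : ℕ) (l : Fin r) : (sigj t r j l : ℕ) =
    if (l : ℕ) = r - t + j then r else (sig t r l : ℕ) := by
  unfold sigj
  split_ifs <;> rfl

theorem sig_inj (t r : ℕ) (ht : 4 ≤ t) (htr : t ≤ r) : Function.Injective (sig t r) := by
  intro a b hab
  have h := congrArg Fin.val hab
  rw [sig_val, sig_val] at h
  apply Fin.ext
  split_ifs at h <;> omega

theorem sig_ne (t r : ℕ) (ht : 4 ≤ t) (htr : t ≤ r) (l : Fin r) : (sig t r l : ℕ) ≠ r := by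
  rw [sig_val]
  have := l.2
  split_ifs <;> omega

theorem sigj_inj (t r j : ℕ) (ht : 4 ≤ t) (htr : t ≤ r) : Function.Injective (sigj t r j) := by
  intro a b hab
  have h := congrArg Fin.val hab
  rw [sigj_val, sigj_val] at h
  have h1 := sig_ne t r ht htr a
  have h2 := sig_ne t r ht htr b
  split_ifs at h
  · apply Fin.ext; omega
  · omega
  · omega
  · exact sig_inj t r ht htr (Fin.ext h)

theorem sig_surj (t r : ℕ) (ht : 4 ≤ t) (htr : t ≤ r) (j : Fin (r + 1)) :
    j = Fin.last r ∨ ∃ l, sig t r l = j := by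
  by_cases h : (j : ℕ) = r
  · left; exact Fin.ext h
  · right
    have := j.2
    rcases lt_trichotomy (j : ℕ) (r - t) with h1 | h1 | h1
    · refine ⟨⟨j, by omega⟩, Fin.ext ?_⟩
      rw [sig_val]; simp only; split_ifs <;> omega
    · refine ⟨⟨r - 1, by omega⟩, Fin.ext ?_⟩
      rw [sig_val]; simp only; split_ifs <;> omega
    · refine ⟨⟨j - 1, by omega⟩, Fin.ext ?_⟩
      rw [sig_val]; simp only; split_ifs <;> omega

/-- Predecessor mod `t`. -/
def prd (t : ℕ) (i : Fin t) : Fin t := ⟨((i : ℕ) + (t - 1)) % t, Nat.mod_lt _ (by have := i.2; omega)⟩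

theorem new_last (t r : ℕ) (ht : 4 ≤ t) (htr : t ≤ r) (i j : Fin t) :
    pushM (sigj t r j) (cycleMat t r (r - t)) i (Fin.last r) =
      (if i = j then 1 else 0) - (if prd t i = j then 1 else 0) := by
  have h : Fin.last r = sigj t r j ⟨r - t + j, by omega⟩ := by
    apply Fin.ext
    rw [sigj_val]; simp
  rw [h, pushM_apply (sigj_inj t r j ht htr)]
  simp only [cycleMat, prd, Fin.ext_iff, Nat.add_left_cancel_iff]
  simp only [eq_comm]

theorem new_sig (t r : ℕ) (ht : 4 ≤ t) (htr : t ≤ r) (i j : Fin t) (l : Fin r) :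
    pushM (sigj t r j) (cycleMat t r (r - t)) i (sig t r l) =
      if (l : ℕ) = r - t + j then 0 else cycleMat t r (r - t) i l := by
  split_ifs with h
  · apply pushM_zero
    intro l' h'
    have h2 := congrArg Fin.val h'
    rw [sigj_val] at h2
    have := sig_ne t r ht htr l
    split_ifs at h2 with h3
    · omega
    · have := sig_inj t r ht htr (Fin.ext h2)
      subst this
      exact h3 h
  · have : sig t r l = sigj t r j l := by
      apply Fin.ext; rw [sigj_val, if_neg h]
    rw [this, pushM_apply (sigj_inj t r j ht htr)]

theorem new_sum_last (t r : ℕ) (ht : 4 ≤ t) (htr : t ≤ r) (i : Fin t) (b : Fin t → ℤ) :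
    ∑ j : Fin t, b j * pushM (sigj t r j) (cycleMat t r (r - t)) i (Fin.last r) =
      b i - b (prd t i) := by
  simp [new_last t r ht htr, mul_sub, Finset.sum_sub_distrib]

theorem new_sum_sig (t r : ℕ) (ht : 4 ≤ t) (htr : t ≤ r) (i : Fin t) (l : Fin r) :
    ∑ j : Fin t, pushM (sigj t r j) (cycleMat t r (r - t)) i (sig t r l) =
      ((t : ℤ) - 1) * cycleMat t r (r - t) i l := by
  simp only [new_sig t r ht htr]
  by_cases h : (l : ℕ) < r - t
  · have : cycleMat t r (r - t) i l = 0 := by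
      unfold cycleMat
      rw [if_neg (by omega), if_neg (by omega)]; rfl
    simp [this]
  · have h1 : ∀ j : Fin t, (if (l : ℕ) = r - t + j then 0 else cycleMat t r (r - t) i l) =
        cycleMat t r (r - t) i l -
          if j = ⟨l - (r - t), by omega⟩ then cycleMat t r (r - t) i l else 0 := by
      intro j
      by_cases hj : (l : ℕ) = r - t + j
      · rw [if_pos hj, if_pos (Fin.ext (by simp only; omega))]; ring
      · rw [if_neg hj, if_neg]
        · ring
        · intro e
          have := congrArg Fin.val e
          simp only at this
          omega
    simp only [h1, Finset.sum_sub_distrib]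
    simp
    ring

theorem prd_const (t : ℕ) (b : Fin t → ℤ) (hb : ∀ i, b i = b (prd t i)) (ht : 0 < t)
    (i : Fin t) : b i = b ⟨0, ht⟩ := by
  obtain ⟨n, hn⟩ := i
  induction n with
  | zero => rfl
  | succ n ih =>
    rw [hb, ← ih (by omega)]
    congr 1
    apply Fin.ext
    simp only [prd]
    rw [show n + 1 + (t - 1) = n + t by omega, Nat.add_mod_right, Nat.mod_eq_of_lt (by omega)]

theorem new_cycle (t r : ℕ) (ht : 4 ≤ t) (htr : t ≤ r) :
    pushM (sigj t r (t - 1)) (cycleMat t r (r - t)) = cycleMat t (r + 1) (r - t + 1) := by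
  have hv : ∀ l, (sigj t r (t - 1) l : ℕ) = if (l : ℕ) < r - t then (l : ℕ) else l + 1 := by
    intro l
    rw [sigj_val, sig_val]
    split_ifs <;> omega
  ext i j
  have hmod : ((i : ℕ) + (t - 1)) % t < t := Nat.mod_lt _ (by omega)
  have hj2 := j.2
  by_cases hj : (j : ℕ) = r - t
  · rw [pushM_zero]
    · unfold cycleMat
      rw [if_neg (by omega), if_neg (by omega)]; rfl
    · intro l e
      have := congrArg Fin.val e
      rw [hv] at this
      split_ifs at this <;> omega
  · obtain ⟨l, rfl⟩ : ∃ l, sigj t r (t - 1) l = j := by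
      rcases lt_or_gt_of_ne hj with h | h
      · refine ⟨⟨j, by omega⟩, Fin.ext ?_⟩
        rw [hv]; simp only; rw [if_pos h]
      · refine ⟨⟨j - 1, by omega⟩, Fin.ext ?_⟩
        rw [hv]; simp only; rw [if_neg (by omega)]; omega
    rw [pushM_apply (sigj_inj t r _ ht htr)]
    unfold cycleMat
    rw [hv]
    congr 1
    · congr 1
      apply propext
      split_ifs <;> omega
    · congr 1
      apply propext
      split_ifs <;> omega

theorem core (t r m n : ℕ) (ht : 4 ≤ t) (htr : t ≤ r) (hn : n = m + t)
    (x : Fin (m + 1) → Matrix (Fin t) (Fin r) ℤ) (h : Fin (m + 1) → ℤ)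
    (hcirc : ∀ i, isCircuit (x i)) (hprim : isPrimitiveRelation h x)
    (hxk : x (Fin.last m) = cycleMat t r (r - t))
    (hhk : h (Fin.last m) = 1) :
    ∃ (x' : Fin n → Matrix (Fin t) (Fin (r+1)) ℤ) (h' : Fin n → ℤ),
      (∀ i, isCircuit (x' i)) ∧ isPrimitiveRelation h' x' ∧
      (∀ i : Fin n, (i : ℕ) = m + t - 1 → x' i = cycleMat t (r+1) (r - t + 1)) ∧
      (∀ (i : Fin n) (hik : (i : ℕ) < m),
        h' i = ((t : ℤ) - 1) * h ⟨(i : ℕ), by omega⟩) ∧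
      (∀ i : Fin n, m ≤ (i : ℕ) → h' i = 1) ∧
      (∑ i, |h' i|) = ((t : ℤ) - 1) * ((∑ i, |h i|) - 1) + t := by
  subst hn
  obtain ⟨hpos, hgcd, hsum, hind⟩ := hprim
  have ht' : (0 : ℤ) < (t : ℤ) - 1 := by omega
  have hσ := sig_inj t r ht htr
  have hlast : ∀ (M : Matrix (Fin t) (Fin r) ℤ) i, pushM (sig t r) M i (Fin.last r) = 0 := by
    intro M i
    apply pushM_zero
    intro l e
    exact sig_ne t r ht htr l (congrArg Fin.val e)
  let X : Fin (m + t) → Matrix (Fin t) (Fin (r+1)) ℤ :=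
    Fin.append (fun i : Fin m => pushM (sig t r) (x i.castSucc))
      (fun j : Fin t => pushM (sigj t r j) (cycleMat t r (r - t)))
  let H : Fin (m + t) → ℤ :=
    Fin.append (fun i : Fin m => ((t : ℤ) - 1) * h i.castSucc) (fun _ : Fin t => 1)
  have hHl : ∀ i : Fin m, H (Fin.castAdd t i) = ((t : ℤ) - 1) * h i.castSucc := by
    intro i; simp [H]
  have hHr : ∀ j : Fin t, H (Fin.natAdd m j) = 1 := by
    intro i; simp [H]
  have hXl : ∀ i : Fin m, X (Fin.castAdd t i) = pushM (sig t r) (x i.castSucc) := by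
    intro i; simp [X]
  have hXr : ∀ j : Fin t, X (Fin.natAdd m j) = pushM (sigj t r j) (cycleMat t r (r - t)) := by
    intro i; simp [X]
  have entL : ∀ (c : Fin (m + t) → ℤ) (i : Fin t),
      (∑ a, c a • X a) i (Fin.last r) =
        c (Fin.natAdd m i) - c (Fin.natAdd m (prd t i)) := by
    intro c i
    rw [Fin.sum_univ_add]
    simp only [hXl, hXr, Matrix.add_apply, Matrix.sum_apply, Matrix.smul_apply, hlast,
      smul_eq_mul]
    rw [new_sum_last t r ht htr i (fun j => c (Fin.natAdd m j))]
    simp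
  have entS : ∀ (c : Fin (m + t) → ℤ) (b : ℤ) (_ : ∀ j, c (Fin.natAdd m j) = b)
      (i : Fin t) (l : Fin r), (∑ a, c a • X a) i (sig t r l) =
        ∑ a : Fin m, c (Fin.castAdd t a) * x a.castSucc i l +
          b * (((t : ℤ) - 1) * x (Fin.last m) i l) := by
    intro c b hb i l
    rw [Fin.sum_univ_add]
    simp only [hXl, hXr, Matrix.add_apply, Matrix.sum_apply, Matrix.smul_apply,
      smul_eq_mul, hb, pushM_apply hσ]
    rw [← Finset.mul_sum, new_sum_sig t r ht htr, hxk]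
  have orig : ∀ (c : Fin (m + 1) → ℤ) (i : Fin t) (l : Fin r), (∑ a, c a • x a) i l =
      ∑ a : Fin m, c a.castSucc * x a.castSucc i l + c (Fin.last m) * x (Fin.last m) i l := by
    intro c i l
    rw [Fin.sum_univ_castSucc]
    simp only [Matrix.add_apply, Matrix.sum_apply, Matrix.smul_apply, smul_eq_mul]
  have hHpos : ∀ i, 0 < H i := by
    intro i
    refine Fin.addCases (fun i => ?_) (fun j => ?_) i
    · rw [hHl]; exact mul_pos ht' (hpos _)
    · rw [hHr]; exact one_pos
  refine ⟨X, H, ?_, ⟨hHpos, ?_, ?_, ?_⟩, ?_, ?_, ?_, ?_⟩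
  · intro i
    refine Fin.addCases (fun i => ?_) (fun j => ?_) i
    · rw [hXl]; exact pushM_circuit hσ _ (hcirc _)
    · rw [hXr, ← hxk]; exact pushM_circuit (sigj_inj t r j ht htr) _ (hcirc _)
  · have h1 : Finset.univ.gcd H ∣ 1 := by
      rw [← hHr ⟨0, by omega⟩]
      exact Finset.gcd_dvd (Finset.mem_univ _)
    rw [← Finset.normalize_gcd]
    exact normalize_eq_one.2 (isUnit_of_dvd_one h1)
  · ext i j
    rcases sig_surj t r ht htr j with rfl | ⟨l, rfl⟩
    · rw [entL]; simp [hHr]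
    · rw [entS H 1 hHr]
      have h1 := orig h i l
      rw [hsum, hhk] at h1
      simp only [hHl, mul_assoc]
      rw [← Finset.mul_sum]
      simp only [Matrix.zero_apply] at h1 ⊢
      linear_combination (-((t : ℤ) - 1)) * h1
  · intro c i₀ hc0 hcs
    have hb := prd_const t (fun j => c (Fin.natAdd m j)) (by
      intro i
      have := entL c i
      rw [hcs] at this
      simp only [Matrix.zero_apply] at this
      omega) (by omega)
    obtain ⟨b, hbdef⟩ : ∃ b, b = c (Fin.natAdd m ⟨0, by omega⟩) := ⟨_, rfl⟩
    simp only [← hbdef] at hb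
    let d : Fin (m + 1) → ℤ :=
      Fin.snoc (α := fun _ => ℤ) (fun a : Fin m => c (Fin.castAdd t a)) (b * ((t : ℤ) - 1))
    have hd1 : ∀ a : Fin m, d a.castSucc = c (Fin.castAdd t a) := by
      intro a; simp [d]
    have hd2 : d (Fin.last m) = b * ((t : ℤ) - 1) := by simp [d]
    have hds : ∑ a, d a • x a = 0 := by
      ext i l
      rw [orig]
      have := entS c b hb i l
      rw [hcs] at this
      simp only [hd1, hd2, Matrix.zero_apply] at this ⊢
      rw [this]; ring
    have hd0 : d = 0 := by
      revert hc0
      refine Fin.addCases (fun i => ?_) (fun j => ?_) i₀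
      · intro hc0
        exact hind d i.castSucc (by rw [hd1, hc0]) hds
      · intro hc0
        rw [hb] at hc0
        exact hind d (Fin.last m) (by rw [hd2, hc0, zero_mul]) hds
    have hb0 : b = 0 := by
      have : b * ((t : ℤ) - 1) = 0 := by rw [← hd2, hd0]; rfl
      rcases mul_eq_zero.1 this with h | h
      · exact h
      · omega
    funext i
    refine Fin.addCases (fun i => ?_) (fun j => ?_) i
    · rw [← hd1, hd0]; rfl
    · rw [hb, hb0]; rfl
  · intro i hi
    have : i = Fin.natAdd m ⟨t - 1, by omega⟩ := by
      apply Fin.ext; simp only [Fin.val_natAdd]; omega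
    rw [this, hXr]
    exact new_cycle t r ht htr
  · intro i hi
    exact hHl ⟨i, hi⟩
  · intro i hi
    have : i = Fin.natAdd m ⟨i - m, by omega⟩ := by
      apply Fin.ext; simp only [Fin.val_natAdd]; omega
    rw [this, hHr]
  · simp only [abs_of_pos (hHpos _), abs_of_pos (hpos _)]
    rw [Fin.sum_univ_add, Fin.sum_univ_castSucc, hhk]
    simp only [hHl, hHr]
    rw [← Finset.mul_sum]
    simp

theorem lemma_3_2 (t r k : ℕ) (ht : 4 ≤ t) (htr : t ≤ r) (hk : 0 < k)
    (x : Fin k → Matrix (Fin t) (Fin r) ℤ) (h : Fin k → ℤ)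
    (hcirc : ∀ i, isCircuit (x i)) (hprim : isPrimitiveRelation h x)
    (hxk : x ⟨k - 1, by omega⟩ = cycleMat t r (r - t))
    (hhk : h ⟨k - 1, by omega⟩ = 1) :
    ∃ (x' : Fin (k + t - 1) → Matrix (Fin t) (Fin (r+1)) ℤ) (h' : Fin (k + t - 1) → ℤ),
      (∀ i, isCircuit (x' i)) ∧ isPrimitiveRelation h' x' ∧
      x' ⟨k + t - 2, by omega⟩ = cycleMat t (r+1) (r - t + 1) ∧
      (∀ (i : Fin (k + t - 1)) (hik : (i : ℕ) < k - 1),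
        h' i = ((t : ℤ) - 1) * h ⟨(i : ℕ), by omega⟩) ∧
      (∀ i : Fin (k + t - 1), k - 1 ≤ (i : ℕ) → h' i = 1) ∧
      (∑ i, |h' i|) = ((t : ℤ) - 1) * ((∑ i, |h i|) - 1) + t := by
  obtain ⟨m, rfl⟩ : ∃ m, k = m + 1 := ⟨k - 1, by omega⟩
  obtain ⟨x', h', h1, h2, h3, h4, h5, h6⟩ :=
    core t r m (m + 1 + t - 1) ht htr (by omega) x h hcirc hprim hxk hhk
  exact ⟨x', h', h1, h2, h3 _ (by simp only; omega), h4, h5, h6⟩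
end

section
/- Main theorem: For all 4 ≤ t ≤ r, the Graver complexity of the incidence matrix A_{t,r} of the complete bipartite graph K_{t,r} satisfies g(A_{t,r}) ≥ (t−1)^{r−t}·(b_t + 1/(t−2)) − 1/(t−2), where b_t = (t−2)!·(15 + Σ_{i=1}^{t−4} (i+4)/(i+2)!). -/
/-- `u ⊑ v` iff `|u i| ≤ |v i|` and `u i * v i ≥ 0` for all `i`. -/
def sqle {ι : Type*} (u v : ι → ℤ) : Prop := ∀ i, |u i| ≤ |v i| ∧ 0 ≤ u i * v i

/-- Membership in the Graver basis of `A`: a `⊑`-minimal nonzero element of `ker_ℤ(A)`. -/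
def inGraver {R C : Type*} [Fintype C] (A : Matrix R C ℤ) (x : C → ℤ) : Prop :=
  A.mulVec x = 0 ∧ x ≠ 0 ∧
    ∀ y : C → ℤ, A.mulVec y = 0 → y ≠ 0 → sqle y x → y = x

/-- The `h`-th Lawrence lifting of `A`. -/
def lawrence {R C : Type*} [DecidableEq C] (A : Matrix R C ℤ) (h : ℕ) :
    Matrix ((Fin h × R) ⊕ C) (Fin h × C) ℤ :=
  fun row col =>
    match row with
    | Sum.inl (i, a) => if i = col.1 then A a col.2 else 0
    | Sum.inr b => if b = col.2 then 1 else 0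

/-- The type of `x ∈ ℤ^{h·C}`: the number of nonzero blocks. -/
noncomputable def typeOf {C : Type*} {h : ℕ} (x : Fin h × C → ℤ) : ℕ :=
  Nat.card {i : Fin h // ∃ b, x (i, b) ≠ 0}

/-- The Graver complexity `g(A)`. -/
noncomputable def graverComplexity {R C : Type*} [Fintype C] [DecidableEq C]
    (A : Matrix R C ℤ) : ℕ∞ :=
  sSup (insert 0 {m : ℕ∞ | ∃ h : ℕ, 1 ≤ h ∧
    ∃ x : Fin h × C → ℤ, inGraver (lawrence A h) x ∧ (typeOf x : ℕ∞) = m})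

/-- The incidence matrix `A_{t,r}` of the complete bipartite graph `K_{t,r}`:
rows indexed by vertices, columns by edges. -/
def incidence (t r : ℕ) : Matrix (Fin t ⊕ Fin r) (Fin t × Fin r) ℤ :=
  fun row e =>
    match row with
    | Sum.inl a => if a = e.1 then 1 else 0
    | Sum.inr b => if b = e.2 then 1 else 0

/-- `b_t = (t−2)!·(15 + Σ_{i=1}^{t−4} (i+4)/(i+2)!)`. -/
def bConst (t : ℕ) : ℚ :=
  (Nat.factorial (t - 2) : ℚ) *
    (15 + ∑ i ∈ Finset.Icc 1 (t - 4), ((i : ℚ) + 4) / (Nat.factorial (i + 2) : ℚ))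


/-- The standard `2k`-cycle as an integer table: `+1` at `(j,j)`, `-1` at `(j+1 mod k, j)`. -/
def stdCyc (k : ℕ) (i j : ℕ) : ℤ :=
  if j < k then (if i = j then 1 else
    if (j + 1 = k ∧ i = 0) ∨ (j + 1 < k ∧ i = j + 1) then -1 else 0) else 0

/-- A signed cycle supported in the `t × r` rectangle. -/
def IsCyc (t r : ℕ) (c : ℕ → ℕ → ℤ) : Prop :=
  (∀ i j, c i j ≠ 0 → i < t ∧ j < r) ∧
  ∃ k : ℕ, 2 ≤ k ∧ ∃ (σ τ : Equiv.Perm ℕ) (e : ℤ), (e = 1 ∨ e = -1) ∧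
    ∀ i j, c i j = e * stdCyc k (σ i) (τ j)

/-- `V` is a positive combination, of total weight `M`, of linearly independent cycles. -/
def CycRep (t r : ℕ) (V : ℕ → ℕ → ℤ) (M : ℕ) : Prop :=
  ∃ (ι : Type) (_ : Fintype ι) (c : ι → ℕ → ℕ → ℤ) (w : ι → ℕ),
    (∀ i, 0 < w i) ∧ (∀ i, IsCyc t r (c i)) ∧ LinearIndependent ℤ c ∧
    V = ∑ i, (w i : ℤ) • c i ∧ ∑ i, w i = M

lemma stdCyc_supp {k i j : ℕ} (h : stdCyc k i j ≠ 0) : i < k ∧ j < k := by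
  unfold stdCyc at h
  split_ifs at h <;> omega

lemma stdCyc_col_eq (k a b : ℕ) (hk : 2 ≤ k) : stdCyc k a b =
    if b < k then ((if a = b then 1 else 0) - (if a = (if b + 1 = k then 0 else b + 1) then 1 else 0))
    else 0 := by
  unfold stdCyc
  grind

lemma stdCyc_col_sum (k b : ℕ) (hk : 2 ≤ k) : ∑ a ∈ Finset.range k, stdCyc k a b = 0 := by
  simp only [stdCyc_col_eq k _ _ hk]
  by_cases hb : b < k
  · simp only [if_pos hb, Finset.sum_sub_distrib, Finset.sum_ite_eq', Finset.mem_range]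
    split_ifs <;> omega
  · simp [hb]

lemma stdCyc_row_eq (k a b : ℕ) (hk : 2 ≤ k) : stdCyc k a b =
    if a < k then ((if b = a then 1 else 0) - (if b = (if a = 0 then k - 1 else a - 1) then 1 else 0))
    else 0 := by
  unfold stdCyc
  grind

lemma stdCyc_row_sum (k a : ℕ) (hk : 2 ≤ k) : ∑ b ∈ Finset.range k, stdCyc k a b = 0 := by
  simp only [stdCyc_row_eq k _ _ hk]
  by_cases hb : a < k
  · simp only [if_pos hb, Finset.sum_sub_distrib, Finset.sum_ite_eq', Finset.mem_range]
    split_ifs <;> omega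
  · simp [hb]

lemma IsCyc.mono {t r t' r' : ℕ} {c} (h : IsCyc t r c) (ht : t ≤ t') (hr : r ≤ r') :
    IsCyc t' r' c :=
  ⟨fun i j hij => ⟨(h.1 i j hij).1.trans_le ht, (h.1 i j hij).2.trans_le hr⟩, h.2⟩

lemma CycRep.step {t r t' r' : ℕ} {V M} (h : CycRep t r V M) (ht : t ≤ t') (hr : r ≤ r') (k m : ℕ)
    (hk : 0 < k) (d : Fin m → ℕ → ℕ → ℤ) (hd : ∀ j, IsCyc t' r' (d j))
    (H : ∀ U : ℕ → ℕ → ℤ, (∀ i j, U i j ≠ 0 → i < t ∧ j < r) → ∀ ν : Fin m → ℤ,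
      U + ∑ j, ν j • d j = 0 → ∀ j, ν j = 0) :
    CycRep t' r' ((k : ℤ) • V + ∑ j, d j) (k * M + m) := by
  obtain ⟨ι, _, c, w, hw, hc, hli, hV, hM⟩ := h
  refine ⟨ι ⊕ Fin m, inferInstance, Sum.elim c d, Sum.elim (fun i => k * w i) (fun _ => 1),
    ?_, ?_, ?_, ?_, ?_⟩
  · rintro (i | j)
    · exact Nat.mul_pos hk (hw i)
    · simp
  · rintro (i | j)
    · exact (hc i).mono ht hr
    · exact hd j
  · rw [Fintype.linearIndependent_iff] at hli ⊢
    intro g hg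
    simp only [Fintype.sum_sum_type, Sum.elim_inl, Sum.elim_inr] at hg
    have h2 := H (∑ i, g (Sum.inl i) • c i) (by
      intro i j hij
      simp only [Finset.sum_apply, Pi.smul_apply] at hij
      obtain ⟨x, -, hx⟩ := Finset.exists_ne_zero_of_sum_ne_zero hij
      exact (hc x).1 i j (fun h0 => hx (by simp [h0]))) _ hg
    have h1 := hli (fun i => g (Sum.inl i)) (by simpa [h2] using hg)
    rintro (i | j)
    · exact h1 i
    · exact h2 j
  · simp only [Fintype.sum_sum_type, hV, Finset.smul_sum, Sum.elim_inl, Sum.elim_inr, smul_smul]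
    simp
  · simp [Fintype.sum_sum_type, ← Finset.mul_sum, hM]

/-- Permuting the columns. -/
def colMap (τ : Equiv.Perm ℕ) : (ℕ → ℕ → ℤ) →ₗ[ℤ] (ℕ → ℕ → ℤ) where
  toFun c := fun i j => c i (τ j)
  map_add' _ _ := rfl
  map_smul' _ _ := rfl

lemma CycRep.perm {t r : ℕ} {V M} (h : CycRep t r V M) (τ : Equiv.Perm ℕ)
    (hτ : ∀ j, τ j < r → j < r) : CycRep t r (fun i j => V i (τ j)) M := by
  obtain ⟨ι, _, c, w, hw, hc, hli, hV, hM⟩ := h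
  refine ⟨ι, inferInstance, fun i => colMap τ (c i), w, hw, ?_, ?_, ?_, hM⟩
  · intro x
    obtain ⟨h1, k, hk, σ, τ', e, he, h2⟩ := hc x
    refine ⟨fun i j hij => ⟨(h1 i (τ j) hij).1, hτ _ (h1 i (τ j) hij).2⟩,
      k, hk, σ, τ.trans τ', e, he, fun i j => ?_⟩
    simp [colMap, h2]
  · refine hli.map' (colMap τ) ?_
    rw [LinearMap.ker_eq_bot']
    intro f hf
    funext i j
    have := congrFun (congrFun hf i) (τ.symm j)
    simpa [colMap] using this
  · have : (fun i j => V i (τ j)) = colMap τ V := rfl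
    rw [this, hV, map_sum]
    simp only [map_smul]

lemma isCyc_std (t r k : ℕ) (hk : 2 ≤ k) (σ τ : Equiv.Perm ℕ) (e : ℤ) (he : e = 1 ∨ e = -1)
    (hσ : ∀ i, σ i < k → i < t) (hτ : ∀ j, τ j < k → j < r) :
    IsCyc t r (fun i j => e * stdCyc k (σ i) (τ j)) := by
  refine ⟨fun i j hij => ?_, k, hk, σ, τ, e, he, fun _ _ => rfl⟩
  have := stdCyc_supp (right_ne_zero_of_mul hij)
  exact ⟨hσ _ this.1, hτ _ this.2⟩

lemma swap_lt {a b n m i : ℕ} (ha : a < m) (hb : b < m) (hn : n ≤ m)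
    (h : Equiv.swap a b i < n) : i < m := by
  rw [Equiv.swap_apply_def] at h
  split_ifs at h <;> omega

/-- Sum over all replacements of one index by a fresh index `r`. -/
lemma sum_swap (f : ℕ → ℤ) (t r b : ℕ) (hr : t ≤ r) (hf : ∀ j, t ≤ j → f j = 0)
    (hs : ∑ j ∈ Finset.range t, f j = 0) :
    ∑ i ∈ Finset.range t, f (Equiv.swap i r b) = ((t : ℤ) - 1) * f b := by
  by_cases hbr : b = r
  · subst hbr
    simp only [Equiv.swap_apply_right, hs, hf b hr, mul_zero]
  · have : ∀ i ∈ Finset.range t, f (Equiv.swap i r b) = f b - if i = b then f b else 0 := by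
      intro i _
      by_cases hi : i = b
      · subst hi; simp [hf r hr]
      · rw [Equiv.swap_apply_of_ne_of_ne (Ne.symm hi) hbr]; simp [hi]
    rw [Finset.sum_congr rfl this, Finset.sum_sub_distrib, Finset.sum_ite_eq']
    simp only [Finset.sum_const, Finset.card_range, Finset.mem_range, nsmul_eq_mul]
    split_ifs with h
    · ring
    · rw [hf b (by omega)]; ring

lemma colStep (t r M : ℕ) (ht : 2 ≤ t) (hr : t ≤ r) (h : CycRep t r (stdCyc t) M) :
    CycRep t (r + 1) (stdCyc t) ((t - 1) * M + (t - 1)) := by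
  have h1 := h.step (le_refl t) (Nat.le_succ r) (t - 1) (t - 1) (by omega)
    (fun n i j => (-1) * stdCyc t ((1 : Equiv.Perm ℕ) i) (Equiv.swap (n.1 + 1) r j)) ?_ ?_
  · have h2 := h1.perm (Equiv.swap 0 r) (fun j hj => swap_lt (by omega) (by omega) le_rfl hj)
    convert h2 using 1
    funext i j
    have hs := sum_swap (stdCyc t i) t r (Equiv.swap 0 r j) hr
      (fun j hj => by by_contra h0; have := stdCyc_supp h0; omega) (stdCyc_row_sum t i ht)
    obtain ⟨s, rfl⟩ : ∃ s, t = s + 1 := ⟨t - 1, by omega⟩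
    rw [Finset.sum_range_succ'] at hs
    have hss : Equiv.swap 0 r (Equiv.swap 0 r j) = j := by simp
    rw [hss] at hs
    simp only [Nat.add_sub_cancel, Pi.add_apply, Pi.smul_apply, Finset.sum_apply,
      Equiv.Perm.one_apply, smul_eq_mul, ← Finset.mul_sum]
    rw [Fin.sum_univ_eq_sum_range
      (fun n => stdCyc (s + 1) i (Equiv.swap (n + 1) r (Equiv.swap 0 r j)))]
    push_cast at hs
    simp only [Nat.add_sub_cancel]
    linarith
  · intro n
    apply isCyc_std _ _ _ ht _ _ _ (Or.inr rfl)
    · simp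
    · intro j hj
      exact swap_lt (by omega) (by omega) (by omega) hj
  · intro U hU ν hν
    have key : ∀ n (hn : n < t - 1), ν ⟨n, hn⟩ = 0 := by
      intro n
      induction n using Nat.strong_induction_on with
      | _ n ih =>
      intro hn
      have e := congrFun (congrFun hν (n + 1)) r
      have hU0 : U (n + 1) r = 0 := by
        by_contra h0; have := hU _ _ h0; omega
      simp only [Pi.add_apply, Pi.smul_apply, Finset.sum_apply, hU0, Pi.zero_apply,
        Equiv.Perm.one_apply, Equiv.swap_apply_right, smul_eq_mul, zero_add] at e
      rw [Finset.sum_eq_single ⟨n, hn⟩] at e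
      · have : stdCyc t (n + 1) (n + 1) = 1 := by
          unfold stdCyc; split_ifs <;> omega
        simp only [this] at e
        omega
      · intro b _ hb
        have hbn : b.1 ≠ n := fun h => hb (Fin.ext h)
        rcases lt_or_gt_of_ne hbn with h | h
        · rw [ih b.1 h b.2]; simp
        · have hbn' : n < b.1 := h
          have : stdCyc t (n + 1) (b.1 + 1) = 0 := by
            have hbt := b.2
            unfold stdCyc; grind
          simp [this]
      · simp
    exact fun j => key j.1 j.2

lemma rowStep (t M : ℕ) (ht : 2 ≤ t) (h : CycRep t (t + 1) (stdCyc t) M) :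
    CycRep (t + 1) (t + 1) (stdCyc (t + 1)) ((t - 1) * M + t) := by
  -- row permutation sending `0, t` to `0, 1`, and likewise for columns
  have h1 := h.step (Nat.le_succ t) (le_refl (t + 1)) (t - 1) t (by omega)
    (fun n => if n.1 = 0 then
        (fun i j => 1 * stdCyc 2 (Equiv.swap 1 t i) (Equiv.swap 1 t j))
      else (fun i j => (-1) * stdCyc t (Equiv.swap n.1 t i) ((1 : Equiv.Perm ℕ) j))) ?_ ?_
  · convert h1 using 1
    funext i j
    have hs := sum_swap (fun i => stdCyc t i j) t t i le_rfl
      (fun j hj => by by_contra h0; have := stdCyc_supp h0; omega) (stdCyc_col_sum t j ht)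
    obtain ⟨s, rfl⟩ : ∃ s, t = s + 1 := ⟨t - 1, by omega⟩
    rw [Finset.sum_range_succ'] at hs
    simp only [Nat.add_sub_cancel, Pi.add_apply, Pi.smul_apply, Finset.sum_apply, smul_eq_mul]
    rw [Fin.sum_univ_succ]
    rw [if_pos (show ((0 : Fin (s + 1)) : ℕ) = 0 from rfl)]
    simp only [Fin.val_succ, Nat.succ_ne_zero, if_false,
      Equiv.Perm.one_apply, ← Finset.mul_sum]
    rw [Fin.sum_univ_eq_sum_range
      (fun n => stdCyc (s + 1) (Equiv.swap (n + 1) (s + 1) i) j)]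
    push_cast at hs
    have hq : stdCyc (s + 1 + 1) i j = stdCyc (s + 1) (Equiv.swap 0 (s + 1) i) j +
        stdCyc 2 (Equiv.swap 1 (s + 1) i) (Equiv.swap 1 (s + 1) j) := by
      have e1 : stdCyc 2 (Equiv.swap 1 (s + 1) i) (Equiv.swap 1 (s + 1) j) =
          if i = 0 ∨ i = s + 1 then (if j = 0 ∨ j = s + 1 then (if i = j then 1 else -1) else 0)
          else 0 := by
        unfold stdCyc
        simp only [Equiv.swap_apply_def]
        grind
      rw [e1]
      unfold stdCyc
      simp only [Equiv.swap_apply_def]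
      grind
    linarith
  · intro n
    by_cases hn : n.1 = 0
    · simp only [hn, if_true]
      apply isCyc_std _ _ _ le_rfl _ _ _ (Or.inl rfl)
      · intro j hj; exact swap_lt (by omega) (by omega) (by omega) hj
      · intro j hj; exact swap_lt (by omega) (by omega) (by omega) hj
    · simp only [hn, if_false]
      apply isCyc_std _ _ _ ht _ _ _ (Or.inr rfl)
      · intro j hj; exact swap_lt (by omega) (by omega) (by omega) hj
      · intro j hj; simp at hj; omega
  · intro U hU ν hν
    have ev : ∀ b, ∑ n : Fin t, ν n * (if n.1 = 0 then stdCyc 2 1 (Equiv.swap 1 t b)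
        else - stdCyc t n.1 b) = 0 := by
      intro b
      have e := congrFun (congrFun hν t) b
      have hU0 : U t b = 0 := by
        by_contra h0; have := hU _ _ h0; omega
      simp only [Pi.add_apply, Pi.smul_apply, Finset.sum_apply, hU0, Pi.zero_apply,
        smul_eq_mul, zero_add] at e
      rw [← e]
      refine Finset.sum_congr rfl fun n _ => ?_
      by_cases hn : n.1 = 0 <;> simp [hn]
    have key : ∀ n (hn : n < t), ν ⟨n, hn⟩ = 0 := by
      intro n
      induction n using Nat.strong_induction_on with
      | _ n ih =>
      intro hn
      rcases Nat.eq_zero_or_pos n with h0 | h0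
      · have e := ev t
        rw [Finset.sum_eq_single ⟨n, hn⟩] at e
        · simp only [h0, if_true, Equiv.swap_apply_right] at e
          have : stdCyc 2 1 1 = 1 := by decide
          simpa [this, h0] using e
        · intro b _ hb
          have hbn : b.1 ≠ 0 := fun h => hb (Fin.ext (h.trans h0.symm))
          have : stdCyc t b.1 t = 0 := by simp [stdCyc]
          simp [hbn, this]
        · simp
      · have e := ev (n - 1)
        rw [Finset.sum_eq_single ⟨n, hn⟩] at e
        · have : stdCyc t n (n - 1) = -1 := by
            unfold stdCyc; split_ifs <;> omega
          simpa [this, h0.ne'] using e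
        · intro b _ hb
          have hbn : b.1 ≠ n := fun h => hb (Fin.ext h)
          rcases lt_or_gt_of_ne hbn with h | h
          · rw [ih b.1 h b.2]; simp
          · have h3 : b.1 ≠ 0 := by omega
            have : stdCyc t b.1 (n - 1) = 0 := by
              unfold stdCyc; split_ifs <;> omega
            simp [this, h3]
        · simp
    exact fun j => key j.1 j.2

lemma base3 : CycRep 3 3 (stdCyc 3) 7 := by
  refine ⟨Fin 4, inferInstance,
    ![fun i j => 1 * stdCyc 2 ((1 : Equiv.Perm ℕ) i) ((1 : Equiv.Perm ℕ) j),
      fun i j => 1 * stdCyc 3 ((1 : Equiv.Perm ℕ) i) (Equiv.swap 0 1 j),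
      fun i j => 1 * stdCyc 3 ((1 : Equiv.Perm ℕ) i) ((Equiv.swap 1 2 * Equiv.swap 0 1 : Equiv.Perm ℕ) j),
      fun i j => 1 * stdCyc 3 ((1 : Equiv.Perm ℕ) i) (Equiv.swap 0 2 j)],
    ![3, 2, 1, 1], ?_, ?_, ?_, ?_, ?_⟩
  · decide
  · intro i
    fin_cases i
    · refine isCyc_std _ _ _ (by norm_num) _ _ _ (Or.inl rfl) ?_ ?_ <;>
      · intro j hj; simp at hj; omega
    · refine isCyc_std _ _ _ (by norm_num) _ _ _ (Or.inl rfl) ?_ ?_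
      · intro j hj; exact hj
      · intro j hj; exact swap_lt (by omega) (by omega) le_rfl hj
    · refine isCyc_std _ _ _ (by norm_num) _ _ _ (Or.inl rfl) ?_ ?_
      · intro j hj; exact hj
      · intro j hj
        exact swap_lt (by omega) (by omega) le_rfl (swap_lt (by omega) (by omega) le_rfl hj)
    · refine isCyc_std _ _ _ (by norm_num) _ _ _ (Or.inl rfl) ?_ ?_
      · intro j hj; exact hj
      · intro j hj; exact swap_lt (by omega) (by omega) le_rfl hj
  · rw [Fintype.linearIndependent_iff]
    intro g hg
    have e := fun a b => congrFun (congrFun hg a) b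
    simp only [Fin.sum_univ_four, Pi.add_apply, Pi.smul_apply, Pi.zero_apply, smul_eq_mul,
      Matrix.cons_val] at e
    have e00 := e 0 0
    have e01 := e 0 1
    have e10 := e 1 0
    have e11 := e 1 1
    simp [stdCyc, Equiv.swap_apply_def] at e00 e01 e10 e11
    intro i
    fin_cases i <;> simp <;> omega
  · funext i j
    simp only [Fin.sum_univ_four, Pi.add_apply, Pi.smul_apply, smul_eq_mul, Matrix.cons_val]
    by_cases hj : j < 3
    · interval_cases j <;> simp [stdCyc, Equiv.swap_apply_def] <;> split_ifs <;> omega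
    · have h0 : j ≠ 0 := by omega
      have h1 : j ≠ 1 := by omega
      have h2 : j ≠ 2 := by omega
      simp [stdCyc, Equiv.swap_apply_def, h0, h1, h2, hj]
      omega
  · decide


lemma finsum_perm_range {f : ℕ → ℤ} {n : ℕ} (hf : ∀ j, f j ≠ 0 → j < n) (τ : Equiv.Perm ℕ) :
    ∑ᶠ j, f (τ j) = ∑ j ∈ Finset.range n, f j := by
  rw [finsum_comp_equiv τ]
  apply finsum_eq_sum_of_support_subset
  intro j hj
  simpa using hf j hj

lemma IsCyc.row_sum {t r : ℕ} {c} (h : IsCyc t r c) (i : ℕ) :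
    ∑ j ∈ Finset.range r, c i j = 0 := by
  obtain ⟨h1, k, hk, σ, τ, e, he, h2⟩ := h
  rw [← finsum_perm_range (fun j hj => (h1 i j hj).2) 1]
  have h3 : ∀ j, c i ((1 : Equiv.Perm ℕ) j) = (fun j => e * stdCyc k (σ i) j) (τ j) := by
    intro j; simp [h2]
  rw [finsum_congr h3, finsum_perm_range (f := fun j => e * stdCyc k (σ i) j) (n := k)]
  · rw [← Finset.mul_sum, stdCyc_row_sum k _ hk, mul_zero]
  · intro j hj
    exact (stdCyc_supp (right_ne_zero_of_mul hj)).2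

lemma IsCyc.col_sum {t r : ℕ} {c} (h : IsCyc t r c) (j : ℕ) :
    ∑ i ∈ Finset.range t, c i j = 0 := by
  obtain ⟨h1, k, hk, σ, τ, e, he, h2⟩ := h
  rw [← finsum_perm_range (f := fun i => c i j) (fun i hj => (h1 i j hj).1) 1]
  have h3 : ∀ i, c ((1 : Equiv.Perm ℕ) i) j = (fun i => e * stdCyc k i (τ j)) (σ i) := by
    intro j; simp [h2]
  rw [finsum_congr h3, finsum_perm_range (f := fun i => e * stdCyc k i (τ j)) (n := k)]
  · rw [← Finset.mul_sum, stdCyc_col_sum k _ hk, mul_zero]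
  · intro j hj
    exact (stdCyc_supp (right_ne_zero_of_mul hj)).1

lemma std_minimal (k : ℕ) (hk : 2 ≤ k) (y : ℕ → ℕ → ℤ)
    (hs : ∀ i j, stdCyc k i j = 0 → y i j = 0)
    (hrow : ∀ i, ∑ᶠ j, y i j = 0) (hcol : ∀ j, ∑ᶠ i, y i j = 0) :
    ∀ i j, y i j = y 0 0 * stdCyc k i j := by
  have hc : ∀ j, j < k → y j j + y (if j + 1 = k then 0 else j + 1) j = 0 := by
    intro j hj
    rw [← hcol j, finsum_eq_sum_of_support_subset (s := {j, if j + 1 = k then 0 else j + 1}),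
      Finset.sum_pair]
    · split_ifs <;> omega
    · intro i hi
      have : stdCyc k i j ≠ 0 := fun h => hi (hs _ _ h)
      simp only [Finset.coe_insert, Finset.coe_singleton, Set.mem_insert_iff,
        Set.mem_singleton_iff]
      unfold stdCyc at this
      grind
  have hr : ∀ i, i + 1 < k → y (i + 1) (i + 1) + y (i + 1) i = 0 := by
    intro i hi
    rw [← hrow (i + 1), finsum_eq_sum_of_support_subset (s := {i + 1, i}), Finset.sum_pair]
    · omega
    · intro j hj
      have : stdCyc k (i + 1) j ≠ 0 := fun h => hj (hs _ _ h)
      simp only [Finset.coe_insert, Finset.coe_singleton, Set.mem_insert_iff,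
        Set.mem_singleton_iff]
      unfold stdCyc at this
      grind
  have hd : ∀ i, i < k → y i i = y 0 0 := by
    intro i
    induction i with
    | zero => intro _; rfl
    | succ i ih =>
      intro hi
      have h1 := ih (by omega)
      have h2 := hc i (by omega)
      have h3 := hr i hi
      rw [if_neg (by omega)] at h2
      linarith
  intro i j
  by_cases h0 : stdCyc k i j = 0
  · rw [h0, hs _ _ h0, mul_zero]
  · have hj := (stdCyc_supp h0).2
    have h1 := hd j hj
    have h2 := hc j hj
    by_cases hij : i = j
    · subst hij
      simp [stdCyc, hj, h1]
    · have hi : i = if j + 1 = k then 0 else j + 1 := by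
        unfold stdCyc at h0
        grind
      have : stdCyc k i j = -1 := by
        unfold stdCyc at h0 ⊢
        grind
      rw [← hi] at h2
      rw [this]
      linarith

lemma IsCyc.minimal {t r : ℕ} {c} (h : IsCyc t r c) (y : ℕ → ℕ → ℤ)
    (hy : ∀ i j, y i j ≠ 0 → i < t ∧ j < r)
    (hs : ∀ i j, |y i j| ≤ |c i j| ∧ 0 ≤ y i j * c i j)
    (hrow : ∀ i, ∑ j ∈ Finset.range r, y i j = 0)
    (hcol : ∀ j, ∑ i ∈ Finset.range t, y i j = 0) :
    ∃ δ : ℤ, (δ = 0 ∨ δ = 1) ∧ ∀ i j, y i j = δ * c i j := by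
  obtain ⟨h1, k, hk, σ, τ, e, he, h2⟩ := h
  have key := std_minimal k hk (fun i j => y (σ.symm i) (τ.symm j)) (by
      intro i j h0
      have := (hs (σ.symm i) (τ.symm j)).1
      rw [h2] at this
      simpa [h0] using this) (by
      intro i
      exact (finsum_perm_range (fun j hj => (hy (σ.symm i) j hj).2) τ.symm).trans (hrow _)) (by
      intro j
      exact (finsum_perm_range (f := fun i => y i (τ.symm j))
        (fun i hi => (hy i (τ.symm j) hi).1) σ.symm).trans (hcol _))
  have key' : ∀ i j, y i j = y (σ.symm 0) (τ.symm 0) * stdCyc k (σ i) (τ j) := by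
    intro i j
    simpa using key (σ i) (τ j)
  have h00 := hs (σ.symm 0) (τ.symm 0)
  have hst : stdCyc k 0 0 = 1 := by
    unfold stdCyc; split_ifs <;> omega
  rw [h2] at h00
  simp only [Equiv.apply_symm_apply, hst, mul_one] at h00
  generalize y (σ.symm 0) (τ.symm 0) = s at key' h00
  have hee : e * e = 1 := by rcases he with rfl | rfl <;> norm_num
  refine ⟨s * e, ?_, ?_⟩
  · obtain ⟨ha, hb⟩ := h00
    rcases he with rfl | rfl
    · simp only [abs_one] at ha
      have := abs_le.mp ha
      omega
    · simp only [abs_neg, abs_one] at ha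
      have := abs_le.mp ha
      omega
  · intro i j
    rw [key', h2, mul_assoc, ← mul_assoc e e, hee, one_mul]

lemma lawrence_ker (t r h : ℕ) (y : Fin h × (Fin t × Fin r) → ℤ) :
    (lawrence (incidence t r) h).mulVec y = 0 ↔
      (∀ b i, ∑ j, y (b, (i, j)) = 0) ∧ (∀ b j, ∑ i, y (b, (i, j)) = 0) ∧
      ∀ i j, ∑ b, y (b, (i, j)) = 0 := by
  have e1 : ∀ b i, (lawrence (incidence t r) h).mulVec y (Sum.inl (b, Sum.inl i)) =
      ∑ j, y (b, (i, j)) := by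
    intro b i
    simp [Matrix.mulVec, dotProduct, lawrence, incidence, Fintype.sum_prod_type, ite_mul]
    rw [Finset.sum_comm]
    simp
  have e2 : ∀ b j, (lawrence (incidence t r) h).mulVec y (Sum.inl (b, Sum.inr j)) =
      ∑ i, y (b, (i, j)) := by
    intro b i
    simp [Matrix.mulVec, dotProduct, lawrence, incidence, Fintype.sum_prod_type, ite_mul]
  have e3 : ∀ i j, (lawrence (incidence t r) h).mulVec y (Sum.inr (i, j)) =
      ∑ b, y (b, (i, j)) := by
    intro i j
    simp [Matrix.mulVec, dotProduct, lawrence, Fintype.sum_prod_type, ite_mul]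
  constructor
  · intro h0
    refine ⟨fun b i => ?_, fun b j => ?_, fun i j => ?_⟩
    · rw [← e1, h0]; rfl
    · rw [← e2, h0]; rfl
    · rw [← e3, h0]; rfl
  · rintro ⟨h1, h2, h3⟩
    funext x
    rcases x with ⟨b, i | j⟩ | ⟨i, j⟩
    · rw [e1, h1]; rfl
    · rw [e2, h2]; rfl
    · rw [e3, h3]; rfl

lemma CycRep.le_graver {t r M : ℕ} (h : CycRep t r (stdCyc t) M) (ht : 2 ≤ t) (hr : t ≤ r) :
    ((M + 1 : ℕ) : ℕ∞) ≤ graverComplexity (incidence t r) := by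
  obtain ⟨ι, _, c, w, hw, hc, hli, hV, hM⟩ := h
  have hcard : Fintype.card (Option (Σ i, Fin (w i))) = M + 1 := by simp [hM]
  let e : Fin (M + 1) ≃ Option (Σ i, Fin (w i)) := (Fintype.equivFinOfCardEq hcard).symm
  let B : Option (Σ i, Fin (w i)) → ℕ → ℕ → ℤ := fun o =>
    match o with
    | none => fun i j => (-1) * stdCyc t ((1 : Equiv.Perm ℕ) i) ((1 : Equiv.Perm ℕ) j)
    | some p => c p.1
  have hB : ∀ o, IsCyc t r (B o) := by
    rintro (_ | p)
    · refine isCyc_std _ _ _ ht _ _ _ (Or.inr rfl) ?_ ?_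
      · simp
      · intro j hj; exact lt_of_lt_of_le hj hr
    · exact hc p.1
  -- sums of scaled blocks
  have hsum : ∀ (δ : Option (Σ i, Fin (w i)) → ℤ) (i j : ℕ),
      ∑ b, δ (e b) * B (e b) i j =
        (∑ x, ((∑ s, δ (some ⟨x, s⟩)) - δ none * w x) • c x) i j := by
    intro δ i j
    rw [e.sum_comp (fun o => δ o * B o i j), Fintype.sum_option, Fintype.sum_sigma]
    have hVij : stdCyc t i j = ∑ x, (w x : ℤ) * c x i j := by
      rw [hV]; simp only [Finset.sum_apply, Pi.smul_apply, smul_eq_mul]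
    simp only [B, Equiv.Perm.one_apply, hVij, Finset.sum_apply, Pi.smul_apply, smul_eq_mul,
      sub_mul, Finset.sum_sub_distrib, Finset.mul_sum, Finset.sum_mul]
    rw [sub_eq_add_neg, add_comm, ← Finset.sum_neg_distrib]
    congr 1
    refine Finset.sum_congr rfl fun x _ => ?_
    ring
  have hnz : ∀ o, ∃ i : Fin t, ∃ j : Fin r, B o i j ≠ 0 := by
    intro o
    obtain ⟨h1, k, hk, σ, τ, ε, hε, h2⟩ := hB o
    have hne : B o (σ.symm 0) (τ.symm 0) ≠ 0 := by
      have hst : stdCyc k 0 0 = 1 := by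
        unfold stdCyc; split_ifs <;> omega
      rw [h2]
      simp only [Equiv.apply_symm_apply, hst]
      rcases hε with rfl | rfl <;> norm_num
    exact ⟨⟨_, (h1 _ _ hne).1⟩, ⟨_, (h1 _ _ hne).2⟩, hne⟩
  let x : Fin (M + 1) × (Fin t × Fin r) → ℤ := fun p => B (e p.1) p.2.1 p.2.2
  have hx : inGraver (lawrence (incidence t r) (M + 1)) x := by
    refine ⟨?_, ?_, ?_⟩
    · rw [lawrence_ker]
      refine ⟨fun b i => ?_, fun b j => ?_, fun i j => ?_⟩
      · exact (Fin.sum_univ_eq_sum_range (fun j => B (e b) i j) r).trans ((hB (e b)).row_sum i)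
      · exact (Fin.sum_univ_eq_sum_range (fun i => B (e b) i j) t).trans ((hB (e b)).col_sum j)
      · have := hsum (fun _ => 1) i j
        simpa [x] using this
    · intro h0
      obtain ⟨i, j, hij⟩ := hnz (e 0)
      exact hij (congrFun h0 (0, (i, j)))
    · intro y hy hy0 hyx
      rw [lawrence_ker] at hy
      obtain ⟨hy1, hy2, hy3⟩ := hy
      have hδ : ∀ o, ∃ δ : ℤ, (δ = 0 ∨ δ = 1) ∧
          ∀ (i : Fin t) (j : Fin r), y (e.symm o, (i, j)) = δ * B o i j := by
        intro o
        let Y : ℕ → ℕ → ℤ := fun i j =>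
          if h : i < t ∧ j < r then y (e.symm o, (⟨i, h.1⟩, ⟨j, h.2⟩)) else 0
        have hY : ∀ (i : Fin t) (j : Fin r), Y i j = y (e.symm o, (i, j)) := by
          intro i j
          simp [Y]
        have hYs : ∀ i j, Y i j ≠ 0 → i < t ∧ j < r := by
          intro i j hij
          by_contra hcon
          exact hij (dif_neg hcon)
        obtain ⟨δ, hδ, hYδ⟩ := (hB o).minimal Y hYs (by
            intro i j
            by_cases hij : i < t ∧ j < r
            · have := hyx (e.symm o, (⟨i, hij.1⟩, ⟨j, hij.2⟩))
              simpa [Y, hij, x] using this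
            · simp [Y, hij]) (by
            intro i
            by_cases hi : i < t
            · rw [← Fin.sum_univ_eq_sum_range (fun j => Y i j) r]
              rw [← hy1 (e.symm o) ⟨i, hi⟩]
              exact Finset.sum_congr rfl fun j _ => hY ⟨i, hi⟩ j
            · exact Finset.sum_eq_zero fun j _ => dif_neg (fun h => hi h.1)) (by
            intro j
            by_cases hj : j < r
            · rw [← Fin.sum_univ_eq_sum_range (fun i => Y i j) t]
              rw [← hy2 (e.symm o) ⟨j, hj⟩]
              exact Finset.sum_congr rfl fun i _ => hY i ⟨j, hj⟩
            · exact Finset.sum_eq_zero fun i _ => dif_neg (fun h => hj h.2))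
        exact ⟨δ, hδ, fun i j => by rw [← hY, hYδ]⟩
      choose δ hδ01 hδy using hδ
      have hyb : ∀ b i j, y (b, (i, j)) = δ (e b) * B (e b) i j := by
        intro b i j
        simpa using hδy (e b) i j
      have hzero : (∑ z, ((∑ s, δ (some ⟨z, s⟩)) - δ none * w z) • c z) = 0 := by
        funext i j
        rw [← hsum δ i j]
        by_cases hij : i < t ∧ j < r
        · have := hy3 ⟨i, hij.1⟩ ⟨j, hij.2⟩
          simpa [hyb] using this
        · refine Finset.sum_eq_zero fun b _ => ?_
          have : B (e b) i j = 0 := by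
            by_contra h0
            exact hij ((hB (e b)).1 i j h0)
          rw [this, mul_zero]
      have hcoef := Fintype.linearIndependent_iff.mp hli _ hzero
      have hall : ∀ o, δ o = δ none := by
        rintro (_ | ⟨z, s⟩)
        · rfl
        · have hz := hcoef z
          have hcst : ∑ s : Fin (w z), (δ (some ⟨z, s⟩) - δ none) = 0 := by
            rw [Finset.sum_sub_distrib]
            simp only [Finset.sum_const, Finset.card_univ, Fintype.card_fin, nsmul_eq_mul]
            linarith
          rcases hδ01 none with hn | hn
          · rw [Finset.sum_eq_zero_iff_of_nonneg] at hcst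
            · have := hcst s (Finset.mem_univ _)
              linarith
            · intro s _
              rcases hδ01 (some ⟨z, s⟩) with h | h <;> rw [hn, h] <;> norm_num
          · rw [Finset.sum_eq_zero_iff_of_nonpos] at hcst
            · have := hcst s (Finset.mem_univ _)
              linarith
            · intro s _
              rcases hδ01 (some ⟨z, s⟩) with h | h <;> rw [hn, h] <;> norm_num
      rcases hδ01 none with hn | hn
      · exfalso
        apply hy0
        funext ⟨b, i, j⟩
        rw [hyb, hall, hn, zero_mul]
        rfl
      · funext ⟨b, i, j⟩
        rw [hyb, hall, hn, one_mul]
  have htype : typeOf x = M + 1 := by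
    unfold typeOf
    have : ∀ b : Fin (M + 1), ∃ p, x (b, p) ≠ 0 := by
      intro b
      obtain ⟨i, j, hij⟩ := hnz (e b)
      exact ⟨(i, j), hij⟩
    rw [Nat.card_congr (Equiv.subtypeUnivEquiv this)]
    simp
  apply le_sSup
  right
  exact ⟨M + 1, by omega, x, hx, by rw [htype]⟩

lemma diagStep (t M : ℕ) (ht : 2 ≤ t) (h : CycRep t t (stdCyc t) M) :
    CycRep (t + 1) (t + 1) (stdCyc (t + 1)) ((t - 1) * ((t - 1) * M + (t - 1)) + t) :=
  rowStep t _ ht (colStep t t M ht le_rfl h)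

lemma bConst_succ (t : ℕ) (ht : 4 ≤ t) :
    bConst (t + 1) = ((t : ℚ) - 1) * bConst t + t + 1 := by
  obtain ⟨s, rfl⟩ : ∃ s, t = s + 4 := ⟨t - 4, by omega⟩
  unfold bConst
  have e1 : s + 4 + 1 - 2 = s + 2 + 1 := by omega
  have e2 : s + 4 + 1 - 4 = s + 1 := by omega
  have e3 : s + 4 - 2 = s + 2 := by omega
  have e4 : s + 4 - 4 = s := by omega
  rw [e1, e2, e3, e4, Finset.sum_Icc_succ_top (by omega)]
  have e5 : s + 1 + 2 = s + 2 + 1 := by omega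
  rw [e5, Nat.factorial_succ]
  have hf : ((s + 2).factorial : ℚ) ≠ 0 := by positivity
  have hs : (s : ℚ) + 2 + 1 ≠ 0 := by positivity
  push_cast
  field_simp
  ring

lemma diag (t : ℕ) (ht : 4 ≤ t) :
    ∃ M, CycRep t t (stdCyc t) M ∧ bConst t ≤ (M : ℚ) + 1 := by
  induction t, ht using Nat.le_induction with
  | base =>
    refine ⟨_, diagStep 3 7 (by omega) base3, ?_⟩
    norm_num [bConst]
  | succ t ht ih =>
    obtain ⟨M, hM, hb⟩ := ih
    refine ⟨_, diagStep t M (by omega) hM, ?_⟩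
    rw [bConst_succ t ht]
    obtain ⟨s, rfl⟩ : ∃ s, t = s + 1 := ⟨t - 1, by omega⟩
    have hs : (1 : ℚ) ≤ s := by exact_mod_cast (by omega : 1 ≤ s)
    have hM0 : (0 : ℚ) ≤ M := by positivity
    simp only [Nat.add_sub_cancel]
    push_cast
    have h1 : (s : ℚ) * bConst (s + 1) ≤ s * (M + 1) :=
      mul_le_mul_of_nonneg_left hb (by linarith)
    have h2 : (1 : ℚ) * (s * (M + 1)) ≤ s * (s * (M + 1)) :=
      mul_le_mul_of_nonneg_right hs (by positivity)
    nlinarith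

lemma rect (t : ℕ) (ht : 4 ≤ t) (n : ℕ) :
    ∃ M, CycRep t (t + n) (stdCyc t) M ∧
      ((t : ℚ) - 1) ^ n * (bConst t + 1 / ((t : ℚ) - 2)) - 1 / ((t : ℚ) - 2) ≤ (M : ℚ) + 1 := by
  induction n with
  | zero =>
    obtain ⟨M, hM, hb⟩ := diag t ht
    exact ⟨M, hM, by simpa using hb⟩
  | succ n ih =>
    obtain ⟨M, hM, hb⟩ := ih
    refine ⟨_, colStep t (t + n) M (by omega) (by omega) hM, ?_⟩
    obtain ⟨s, rfl⟩ : ∃ s, t = s + 2 := ⟨t - 2, by omega⟩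
    have e1 : s + 2 - 1 = s + 1 := by omega
    rw [e1]
    have hs : (0 : ℚ) < s := by exact_mod_cast (by omega : 0 < s)
    push_cast at hb ⊢
    have e2 : (s : ℚ) + 2 - 1 = s + 1 := by ring
    have e3 : (s : ℚ) + 2 - 2 = s := by ring
    rw [e2, e3] at hb ⊢
    have h1 := mul_le_mul_of_nonneg_left hb (by positivity : (0 : ℚ) ≤ s + 1)
    have e4 : (s : ℚ) * (1 / s) = 1 := by field_simp
    rw [pow_succ]
    nlinarith

theorem main_theorem (t r : ℕ) (ht : 4 ≤ t) (htr : t ≤ r) :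
    ∃ m : ℕ, (m : ℕ∞) ≤ graverComplexity (incidence t r) ∧
      ((t : ℚ) - 1) ^ (r - t) * (bConst t + 1 / ((t : ℚ) - 2)) - 1 / ((t : ℚ) - 2) ≤ (m : ℚ) := by
  obtain ⟨n, rfl⟩ : ∃ n, r = t + n := ⟨r - t, by omega⟩
  obtain ⟨M, hM, hb⟩ := rect t ht n
  refine ⟨M + 1, hM.le_graver (by omega) (by omega), ?_⟩
  rw [Nat.add_sub_cancel_left]
  push_cast
  exact hb
end
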